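/- arXiv:2501.08265 — 2 statements merged into one kernel-verified Lean document; each statement's English description precedes it below -/
import Mathlib

section
/- (Expanding-subspace minimization of the RCDM.) Given an initial vector x₀ ∈ R(C) and a set of restricted conjugate directions p₀, …, p_{q−1}, for every k = 1, 2, …, q the RCDM iterate x_k minimizes φ over the affine subspace x₀ + span{p₀, p₁, …, p_{k−1}} ⊆ R(C). -/
open Matrix

/-!
An exact line search along `d` annihilates the residual on `d` and leaves it unchanged on every
vector conjugate to `d`. Hence after `k` steps the residual `r_k` vanishes on
`W = span {p₀, …, p_{k-1}}`. For `d ∈ W` the expansion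
`φ(x_k + d) = φ(x_k) - r_k(d) + (1/2) B(d, d)` has no linear term, and by conjugacy
`B(d, d) = ∑ cᵢ² B(pᵢ, pᵢ) ≥ 0` when `d = ∑ cᵢ pᵢ`; so `x_k` minimizes `φ` over `x_k + W = x₀ + W`.
-/

section Residual

variable {R E : Type*} [CommRing R] [AddCommGroup E] [Module R E]

/-- The residual `b - Sx` at `x`, encoded as the linear functional `v ↦ f(v) - B(x, v)`; for
symmetric `B` it is the negative differential of `(1/2) B(x, x) - f(x)`. -/
def quadraticResidual (B : LinearMap.BilinForm R E) (f : Module.Dual R E) (x : E) :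
    Module.Dual R E :=
  f - B x

theorem quadraticResidual_add_smul_apply {B : LinearMap.BilinForm R E} {f : Module.Dual R E}
    (x d v : E) (a : R) :
    quadraticResidual B f (x + a • d) v = quadraticResidual B f x v - a * B d v := by
  simp only [quadraticResidual, map_add, map_smul, LinearMap.sub_apply, LinearMap.add_apply,
    LinearMap.smul_apply, smul_eq_mul]
  ring

end Residual

section Objective

variable {K E : Type*} [Field K] [AddCommGroup E] [Module K E]
  {B : LinearMap.BilinForm K E} {f : Module.Dual K E}

/-- The quadratic objective `φ(x) = (1/2) B(x, x) - f(x)` of a bilinear form `B` and a linear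
functional `f`, the coordinate-free form of `(1/2) xᵀSx - bᵀx`. -/
def quadraticObjective (B : LinearMap.BilinForm K E) (f : Module.Dual K E) (x : E) : K :=
  1 / 2 * B x x - f x

/-- The point reached from `x` by an exact line search along `d`, one step of the RCDM: for
symmetric `B`, the critical point of the quadratic objective on the line `x + K d`. If `B d d = 0`
the step is `0`, as `a / 0 = 0`. -/
def exactLineStep (B : LinearMap.BilinForm K E) (f : Module.Dual K E) (x d : E) : E :=
  x + (quadraticResidual B f x d / B d d) • d

theorem quadraticResidual_exactLineStep_self {d : E} (hd : B d d ≠ 0) (x : E) :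
    quadraticResidual B f (exactLineStep B f x d) d = 0 := by
  rw [exactLineStep, quadraticResidual_add_smul_apply, div_mul_cancel₀ _ hd, sub_self]

theorem quadraticResidual_exactLineStep_of_apply_eq_zero {d v : E} (h : B d v = 0) (x : E) :
    quadraticResidual B f (exactLineStep B f x d) v = quadraticResidual B f x v := by
  rw [exactLineStep, quadraticResidual_add_smul_apply, h, mul_zero, sub_zero]

theorem quadraticObjective_add [NeZero (2 : K)] (hB : B.IsSymm) (x d : E) :
    quadraticObjective B f (x + d) =
      quadraticObjective B f x - quadraticResidual B f x d + 1 / 2 * B d d := by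
  simp only [quadraticObjective, quadraticResidual, map_add, LinearMap.add_apply,
    LinearMap.sub_apply, hB.eq d x]
  field_simp
  ring

end Objective

section Conjugate

variable {R E ι : Type*} [CommRing R] [LinearOrder R] [IsStrictOrderedRing R] [AddCommGroup E]
  [Module R E] {B : LinearMap.BilinForm R E}

theorem apply_self_nonneg_of_mem_span_of_iIsOrtho {p : ι → E} (hp : B.iIsOrtho p)
    (hnonneg : ∀ i, 0 ≤ B (p i) (p i)) {d : E} (hd : d ∈ Submodule.span R (Set.range p)) :
    0 ≤ B d d := by
  obtain ⟨c, rfl⟩ := Finsupp.mem_span_range_iff_exists_finsupp.1 hd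
  have hdiag : B (c.sum fun i a ↦ a • p i) (c.sum fun i a ↦ a • p i) =
      ∑ i ∈ c.support, c i ^ 2 * B (p i) (p i) := by
    simp only [Finsupp.sum, map_sum, LinearMap.sum_apply, map_smul, LinearMap.smul_apply,
      smul_eq_mul]
    refine Finset.sum_congr rfl fun i hi ↦ ?_
    rw [Finset.sum_eq_single_of_mem i hi fun j _ hji ↦ by rw [hp hji]; ring]
    ring
  rw [hdiag]
  exact Finset.sum_nonneg fun i _ ↦ mul_nonneg (sq_nonneg _) (hnonneg i)

end Conjugate

section Minimization

variable {K E : Type*} [Field K] [LinearOrder K] [IsStrictOrderedRing K] [AddCommGroup E]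
  [Module K E] {B : LinearMap.BilinForm K E} {f : Module.Dual K E}

theorem isMinOn_quadraticObjective_of_quadraticResidual_eq_zero (hB : B.IsSymm)
    {A : AffineSubspace K E} {x : E} (hx : x ∈ A)
    (hres : ∀ d ∈ A.direction, quadraticResidual B f x d = 0)
    (hnonneg : ∀ d ∈ A.direction, 0 ≤ B d d) :
    IsMinOn (quadraticObjective B f) A x := by
  refine isMinOn_iff.2 fun z hz ↦ ?_
  have hd : z - x ∈ A.direction := A.vsub_mem_direction hz hx
  calc quadraticObjective B f x
      ≤ quadraticObjective B f x + 1 / 2 * B (z - x) (z - x) :=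
        le_add_of_nonneg_right (mul_nonneg (by positivity) (hnonneg _ hd))
    _ = quadraticObjective B f (x + (z - x)) := by
        rw [quadraticObjective_add hB, hres _ hd, sub_zero]
    _ = quadraticObjective B f z := by rw [add_sub_cancel]

end Minimization

section ExpandingSubspace

variable {R E : Type*} [Ring R] [AddCommGroup E] [Module R E] {q : ℕ}

variable (R) in
/-- The affine subspace `x₀ + span {p₀, …, p_{k-1}}` searched by the first `k` steps of a
direction method started at `x₀`. It no longer grows with `k` once `q ≤ k`. -/
def expandingSubspace (x₀ : E) (p : Fin q → E) (k : ℕ) : AffineSubspace R E :=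
  AffineSubspace.mk' x₀ (Submodule.span R (p '' {i | (i : ℕ) < k}))

theorem direction_expandingSubspace (x₀ : E) (p : Fin q → E) (k : ℕ) :
    (expandingSubspace R x₀ p k).direction = Submodule.span R (p '' {i | (i : ℕ) < k}) :=
  AffineSubspace.direction_mk' _ _

theorem expandingSubspace_subset {V : Submodule R E} {x₀ : E} {p : Fin q → E} (hx₀ : x₀ ∈ V)
    (hp : ∀ i, p i ∈ V) (k : ℕ) : (expandingSubspace R x₀ p k : Set E) ⊆ V := by
  intro z hz
  have hspan : Submodule.span R (p '' {i | (i : ℕ) < k}) ≤ V :=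
    Submodule.span_le.2 (Set.image_subset_iff.2 fun i _ ↦ hp i)
  exact (V.sub_mem_iff_left hx₀).1 (hspan hz)

end ExpandingSubspace

section Iteration

variable {K E : Type*} [Field K] [AddCommGroup E] [Module K E] {q : ℕ}
  {B : LinearMap.BilinForm K E} {f : Module.Dual K E} {p : Fin q → E} {x : ℕ → E}

theorem iterate_mem_expandingSubspace
    (hstep : ∀ i : Fin q, x (i + 1) = exactLineStep B f (x i) (p i)) {k : ℕ} (hk : k ≤ q) :
    x k ∈ expandingSubspace K (x 0) p k := by
  induction k with
  | zero => exact AffineSubspace.self_mem_mk' _ _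
  | succ k ih =>
    have hprev : x k - x 0 ∈ Submodule.span K (p '' {i | (i : ℕ) < k + 1}) :=
      Submodule.span_mono (Set.image_mono fun _ ↦ Nat.lt_succ_of_lt) (ih (Nat.le_of_succ_le hk))
    have hdir : p ⟨k, hk⟩ ∈ Submodule.span K (p '' {i | (i : ℕ) < k + 1}) :=
      Submodule.subset_span (Set.mem_image_of_mem p (Nat.lt_succ_self k))
    rw [hstep ⟨k, hk⟩, expandingSubspace, AffineSubspace.mem_mk', vsub_eq_sub, exactLineStep,
      add_sub_right_comm]
    exact add_mem hprev (Submodule.smul_mem _ _ hdir)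

theorem quadraticResidual_iterate_apply_eq_zero (hp : B.iIsOrtho p) (hne : ∀ i, B (p i) (p i) ≠ 0)
    (hstep : ∀ i : Fin q, x (i + 1) = exactLineStep B f (x i) (p i)) {k : ℕ} (hk : k ≤ q)
    {i : Fin q} (hi : (i : ℕ) < k) : quadraticResidual B f (x k) (p i) = 0 := by
  induction k with
  | zero => exact absurd hi (Nat.not_lt_zero _)
  | succ k ih =>
    rw [hstep ⟨k, hk⟩]
    obtain hlt | rfl := Nat.lt_succ_iff_lt_or_eq.1 hi
    · have hki : (⟨k, hk⟩ : Fin q) ≠ i := Fin.ne_of_gt hlt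
      rw [quadraticResidual_exactLineStep_of_apply_eq_zero (hp hki), ih (Nat.le_of_succ_le hk) hlt]
    · exact quadraticResidual_exactLineStep_self (hne i) _

theorem quadraticResidual_iterate_eq_zero_of_mem_direction (hp : B.iIsOrtho p)
    (hne : ∀ i, B (p i) (p i) ≠ 0)
    (hstep : ∀ i : Fin q, x (i + 1) = exactLineStep B f (x i) (p i)) {k : ℕ} (hk : k ≤ q)
    {d : E} (hd : d ∈ (expandingSubspace K (x 0) p k).direction) :
    quadraticResidual B f (x k) d = 0 := by
  rw [direction_expandingSubspace] at hd
  have hker : Submodule.span K (p '' {i | (i : ℕ) < k}) ≤ (quadraticResidual B f (x k)).ker :=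
    Submodule.span_le.2 <| Set.image_subset_iff.2 fun _ hi ↦
      quadraticResidual_iterate_apply_eq_zero hp hne hstep hk hi
  exact hker hd

end Iteration

section Matrix

variable {K ι : Type*} [Field K] [Fintype ι] [DecidableEq ι]

theorem quadraticObjective_toBilin' (S : Matrix ι ι K) (b x : ι → K) :
    quadraticObjective S.toBilin' (dotProductBilin K K b) x =
      1 / 2 * (x ⬝ᵥ S *ᵥ x) - b ⬝ᵥ x := by
  rw [quadraticObjective, toBilin'_apply']
  rfl

theorem exactLineStep_toBilin' {S : Matrix ι ι K} (hS : S.IsSymm) (b x d : ι → K) :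
    exactLineStep S.toBilin' (dotProductBilin K K b) x d =
      x + ((b - S *ᵥ x) ⬝ᵥ d / (d ⬝ᵥ S *ᵥ d)) • d := by
  have hres : quadraticResidual S.toBilin' (dotProductBilin K K b) x d = (b - S *ᵥ x) ⬝ᵥ d := by
    rw [quadraticResidual, LinearMap.sub_apply, (isSymm_toBilin'_iff_isSymm.2 hS).eq x d,
      toBilin'_apply', sub_dotProduct, dotProduct_comm (S *ᵥ x)]
    rfl
  rw [exactLineStep, hres, toBilin'_apply']

end Matrix

theorem rcdm_expanding_subspace_minimization_general {K E : Type*} [Field K] [LinearOrder K]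
    [IsStrictOrderedRing K] [AddCommGroup E] [Module K E] {B : LinearMap.BilinForm K E}
    (hB : B.IsSymm) (f : Module.Dual K E) {V : Submodule K E} {q : ℕ} {p : Fin q → E}
    (hpV : ∀ i, p i ∈ V) (hp : B.iIsOrtho p) (hpos : ∀ i, 0 < B (p i) (p i)) {x : ℕ → E}
    (hx0 : x 0 ∈ V) (hstep : ∀ i : Fin q, x (i + 1) = exactLineStep B f (x i) (p i))
    {k : ℕ} (hk : k ≤ q) :
    x k ∈ expandingSubspace K (x 0) p k ∧
      (expandingSubspace K (x 0) p k : Set E) ⊆ V ∧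
      IsMinOn (quadraticObjective B f) (expandingSubspace K (x 0) p k) (x k) := by
  have hmem : x k ∈ expandingSubspace K (x 0) p k :=
    iterate_mem_expandingSubspace hstep hk
  have hres : ∀ d ∈ (expandingSubspace K (x 0) p k).direction,
      quadraticResidual B f (x k) d = 0 := fun _ ↦
    quadraticResidual_iterate_eq_zero_of_mem_direction hp (fun i ↦ (hpos i).ne') hstep hk
  have hnonneg : ∀ d ∈ (expandingSubspace K (x 0) p k).direction, 0 ≤ B d d := by
    intro d hd
    rw [direction_expandingSubspace] at hd
    exact apply_self_nonneg_of_mem_span_of_iIsOrtho hp (fun i ↦ (hpos i).le)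
      (Submodule.span_mono (Set.image_subset_range p _) hd)
  exact ⟨hmem, expandingSubspace_subset hx0 hpV k,
    isMinOn_quadraticObjective_of_quadraticResidual_eq_zero hB hmem hres hnonneg⟩

/-- Expanding-subspace minimization of the RCDM: for every `k = 1, …, q`, the RCDM
iterate `x_k` minimizes `φ(x) = (1/2) xᵀSx − bᵀx` over the affine subspace
`x₀ + span{p₀, …, p_{k−1}}`, which is contained in `R(C)`. -/
theorem rcdm_expanding_subspace_minimization
    (n m : ℕ) (hn : 0 < n) (hm : 0 < m)
    (S : Matrix (Fin n) (Fin n) ℝ) (hS : S.PosDef)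
    (C : Matrix (Fin n) (Fin m) ℝ) (b : Fin n → ℝ)
    (q : ℕ) (hq : q = C.rank)
    (p : Fin q → (Fin n → ℝ))
    (hpnz : ∀ k, p k ≠ 0)
    (hpR : ∀ k, p k ∈ LinearMap.range C.mulVecLin)
    (hconj : ∀ i j, i ≠ j → p i ⬝ᵥ S.mulVec (p j) = 0)
    (x : ℕ → (Fin n → ℝ))
    (hx0 : x 0 ∈ LinearMap.range C.mulVecLin)
    (hrec : ∀ (k : ℕ) (hk : k < q),
        x (k + 1) = x k +
          (((b - S.mulVec (x k)) ⬝ᵥ p ⟨k, hk⟩) /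
            (p ⟨k, hk⟩ ⬝ᵥ S.mulVec (p ⟨k, hk⟩))) • p ⟨k, hk⟩) :
    ∀ (k : ℕ), 1 ≤ k → k ≤ q →
      (x k - x 0 ∈ Submodule.span ℝ (p '' {i : Fin q | (i : ℕ) < k})) ∧
      (∀ z : Fin n → ℝ, z - x 0 ∈ Submodule.span ℝ (p '' {i : Fin q | (i : ℕ) < k}) →
          z ∈ LinearMap.range C.mulVecLin) ∧
      (∀ z : Fin n → ℝ, z - x 0 ∈ Submodule.span ℝ (p '' {i : Fin q | (i : ℕ) < k}) →
          (1 / 2 : ℝ) * (x k ⬝ᵥ S.mulVec (x k)) - b ⬝ᵥ x k ≤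
            (1 / 2 : ℝ) * (z ⬝ᵥ S.mulVec z) - b ⬝ᵥ z) := by
  intro k _ hk
  have hsymm : S.IsSymm := isHermitian_iff_isSymm.1 hS.isHermitian
  have hpos : ∀ i, 0 < S.toBilin' (p i) (p i) := fun i ↦ by
    simpa only [toBilin'_apply', star_trivial] using hS.dotProduct_mulVec_pos (hpnz i)
  simp only [← quadraticObjective_toBilin']
  exact rcdm_expanding_subspace_minimization_general (isSymm_toBilin'_iff_isSymm.2 hsymm)
    (dotProductBilin ℝ ℝ b) hpR (fun i j hij ↦ (toBilin'_apply' S _ _).trans (hconj i j hij))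
    hpos hx0 (fun i ↦ (hrec i i.2).trans (exactLineStep_toBilin' hsymm b _ _).symm) hk
end

section
/- (Orthogonality of projected residuals of the ReK method.) If the ReK directions p₀, p₁, …, p_{q−1} are all nonzero, then for every k = 1, 2, …, q and every i = 0, 1, …, k−1 the residuals satisfy r_kᵀ Π_C r_i = 0. -/
open Matrix

/-!
The ReK method is conjugate gradients with the projection `P` as preconditioner. The step length
makes each residual orthogonal to the last direction, and `β` makes consecutive directions
conjugate. Conjugacy carries the first property over to all earlier directions. Conversely, as
`S pᵢ` is a multiple of `rᵢ - rᵢ₊₁`, orthogonality of `rₖ₊₁` to the earlier directions makes its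
projection `P rₖ₊₁`, and hence `pₖ₊₁`, conjugate to them, as long as no step length vanishes.
The numerator of the step length is `⟨rᵢ, pᵢ⟩ = ⟨rᵢ, P rᵢ⟩`, which can only vanish if `P rᵢ = 0`,
and then `pᵢ = 0`.
-/

open LinearMap (BilinForm)

theorem apply_eq_zero_of_isSelfAdjoint_of_isIdempotentElem {R M : Type*} [CommSemiring R]
    [AddCommMonoid M] [Module R M] {B : BilinForm R M} {P : Module.End R M}
    (hB : ∀ v, B v v = 0 → v = 0) (hP : B.IsSelfAdjoint P) (hPidem : IsIdempotentElem P)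
    {v : M} (hv : B v (P v) = 0) : P v = 0 := by
  refine hB (P v) ?_
  rw [hP v (P v), ← Module.End.mul_apply, hPidem.eq, hv]

theorem isSelfAdjoint_mulVecLin_of_isSymm {R ι : Type*} [CommSemiring R] [Fintype ι]
    {A : Matrix ι ι R} (hA : A.IsSymm) : (dotProductBilin R R).IsSelfAdjoint A.mulVecLin := by
  intro u v
  change A *ᵥ u ⬝ᵥ v = u ⬝ᵥ A *ᵥ v
  rw [dotProduct_mulVec, ← mulVec_transpose, hA.eq]

section ReK

variable {K V : Type*} [Field K] [AddCommGroup V] [Module K V]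

/-- The restricted Krylov (ReK) iteration for `S x = b`, where `B` plays the role of the standard
inner product and `P` that of the projection `Π_C`, with iterates `x`, directions `p` and
residuals `r`. By `a / 0 = 0`, a direction with `B (p k) (S (p k)) = 0` leaves the iterate
unchanged. -/
structure IsReKIteration (B : BilinForm K V) (S P : Module.End K V) (b : V) (x p r : ℕ → V) :
    Prop where
  residual_eq : ∀ k, r k = b - S (x k)
  direction_zero : p 0 = P (r 0)
  direction_succ : ∀ k, p (k + 1) =
    P (r (k + 1)) + (-B (r (k + 1)) (P (S (p k))) / B (p k) (S (p k))) • p k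
  iterate_succ : ∀ k, x (k + 1) = x k + (B (r k) (p k) / B (p k) (S (p k))) • p k

variable {B : BilinForm K V} {S P : Module.End K V}

namespace IsReKIteration

variable {b : V} {x p r : ℕ → V}

theorem residual_succ (h : IsReKIteration B S P b x p r) (k : ℕ) :
    r (k + 1) = r k - (B (r k) (p k) / B (p k) (S (p k))) • S (p k) := by
  rw [h.residual_eq (k + 1), h.iterate_succ, map_add, map_smul, ← sub_sub, ← h.residual_eq]

theorem residual_succ_orthogonal_last_direction (h : IsReKIteration B S P b x p r)
    (hS : B.IsSelfAdjoint S) {k : ℕ} (hk : B (p k) (S (p k)) ≠ 0) :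
    B (r (k + 1)) (p k) = 0 := by
  rw [h.residual_succ, map_sub, map_smul, LinearMap.sub_apply, LinearMap.smul_apply,
    hS (p k) (p k), smul_eq_mul, div_mul_cancel₀ _ hk, sub_self]

theorem direction_succ_conjugate_last (h : IsReKIteration B S P b x p r)
    (hP : B.IsSelfAdjoint P) {k : ℕ} (hk : B (p k) (S (p k)) ≠ 0) :
    B (p (k + 1)) (S (p k)) = 0 := by
  rw [h.direction_succ, map_add, map_smul, LinearMap.add_apply, LinearMap.smul_apply,
    hP (r (k + 1)) (S (p k)), smul_eq_mul, div_mul_cancel₀ _ hk, add_neg_cancel]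

theorem direction_eq_zero_of_projected_residual_eq_zero (h : IsReKIteration B S P b x p r)
    (hP : B.IsSelfAdjoint P) {k : ℕ} (hk : P (r k) = 0) : p k = 0 := by
  cases k with
  | zero => rw [h.direction_zero, hk]
  | succ k =>
    have hβ : B (r (k + 1)) (P (S (p k))) = 0 := by
      rw [← hP (r (k + 1)) (S (p k)), hk, map_zero, LinearMap.zero_apply]
    rw [h.direction_succ, hk, hβ, neg_zero, zero_div, zero_smul, add_zero]

theorem orthogonal_projected_residual (h : IsReKIteration B S P b x p r) {v : V} {k : ℕ}
    (hv : ∀ i < k, B v (p i) = 0) : ∀ i < k, B v (P (r i)) = 0 := by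
  intro i hi
  cases i with
  | zero => rw [← h.direction_zero, hv 0 hi]
  | succ j =>
    have hdir := hv (j + 1) hi
    rwa [h.direction_succ, map_add, map_smul, hv j (by lia), smul_zero, add_zero] at hdir

theorem residual_direction_eq_residual_projected_residual
    (h : IsReKIteration B S P b x p r) (hS : B.IsSelfAdjoint S) {k : ℕ}
    (hcurv : ∀ j < k, B (p j) (S (p j)) ≠ 0) : B (r k) (p k) = B (r k) (P (r k)) := by
  cases k with
  | zero => rw [h.direction_zero]
  | succ k =>
    rw [h.direction_succ, map_add, map_smul,
      h.residual_succ_orthogonal_last_direction hS (hcurv k k.lt_add_one), smul_zero, add_zero]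

theorem residual_direction_ne_zero (h : IsReKIteration B S P b x p r) (hS : B.IsSelfAdjoint S)
    (hP : B.IsSelfAdjoint P) (hPdef : ∀ v, B v (P v) = 0 → P v = 0) {k : ℕ}
    (hcurv : ∀ j ≤ k, B (p j) (S (p j)) ≠ 0) : B (r k) (p k) ≠ 0 := by
  rw [h.residual_direction_eq_residual_projected_residual hS fun j hj ↦ hcurv j hj.le]
  intro hrk
  have hpk : p k = 0 :=
    h.direction_eq_zero_of_projected_residual_eq_zero hP (hPdef _ hrk)
  exact hcurv k le_rfl (by rw [hpk, map_zero, LinearMap.zero_apply])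

theorem residual_succ_orthogonal (h : IsReKIteration B S P b x p r) (hS : B.IsSelfAdjoint S)
    {k : ℕ} (hk : B (p k) (S (p k)) ≠ 0) (horth : ∀ i < k, B (r k) (p i) = 0)
    (hconj : ∀ i < k, B (p k) (S (p i)) = 0) : ∀ i < k + 1, B (r (k + 1)) (p i) = 0 := by
  intro i hi
  obtain hlt | rfl := Nat.lt_succ_iff_lt_or_eq.mp hi
  · rw [h.residual_succ, map_sub, map_smul, LinearMap.sub_apply, LinearMap.smul_apply,
      hS (p k) (p i), hconj i hlt, horth i hlt, smul_zero, sub_zero]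
  · exact h.residual_succ_orthogonal_last_direction hS hk

theorem orthogonal_projected_image_direction (h : IsReKIteration B S P b x p r) {v : V} {i : ℕ}
    (hri : B (r i) (p i) ≠ 0) (hi : B (p i) (S (p i)) ≠ 0) (hv : B v (P (r i)) = 0)
    (hv_succ : B v (P (r (i + 1))) = 0) : B v (P (S (p i))) = 0 := by
  rw [h.residual_succ, map_sub, map_sub, hv, zero_sub, neg_eq_zero, map_smul, map_smul] at hv_succ
  exact (smul_eq_zero.mp hv_succ).resolve_left (div_ne_zero hri hi)

theorem direction_succ_conjugate (h : IsReKIteration B S P b x p r)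
    (hS : B.IsSelfAdjoint S) (hP : B.IsSelfAdjoint P) (hPdef : ∀ v, B v (P v) = 0 → P v = 0)
    {k : ℕ} (hcurv : ∀ j ≤ k, B (p j) (S (p j)) ≠ 0)
    (horth : ∀ i < k + 1, B (r (k + 1)) (p i) = 0) (hconj : ∀ i < k, B (p k) (S (p i)) = 0) :
    ∀ i < k + 1, B (p (k + 1)) (S (p i)) = 0 := by
  intro i hi
  obtain hlt | rfl := Nat.lt_succ_iff_lt_or_eq.mp hi
  · have hres := h.orthogonal_projected_residual horth
    have hPS : B (r (k + 1)) (P (S (p i))) = 0 :=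
      h.orthogonal_projected_image_direction
        (h.residual_direction_ne_zero hS hP hPdef fun j hj ↦ hcurv j (hj.trans hlt.le))
        (hcurv i hlt.le) (hres i hi) (hres (i + 1) (by lia))
    rw [h.direction_succ, map_add, map_smul, LinearMap.add_apply, LinearMap.smul_apply,
      hP (r (k + 1)) (S (p i)), hPS, hconj i hlt, smul_zero, add_zero]
  · exact h.direction_succ_conjugate_last hP (hcurv i le_rfl)

theorem orthogonal_and_conjugate (h : IsReKIteration B S P b x p r) (hS : B.IsSelfAdjoint S)
    (hP : B.IsSelfAdjoint P) (hPdef : ∀ v, B v (P v) = 0 → P v = 0) {k : ℕ}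
    (hcurv : ∀ j < k, B (p j) (S (p j)) ≠ 0) :
    (∀ i < k, B (r k) (p i) = 0) ∧ ∀ i < k, B (p k) (S (p i)) = 0 := by
  induction k with
  | zero => simp
  | succ k ih =>
    obtain ⟨horth, hconj⟩ := ih fun j hj ↦ hcurv j (hj.trans k.lt_add_one)
    have horth_succ := h.residual_succ_orthogonal hS (hcurv k k.lt_add_one) horth hconj
    exact ⟨horth_succ, h.direction_succ_conjugate hS hP hPdef
      (fun j hj ↦ hcurv j (Nat.lt_succ_of_le hj)) horth_succ hconj⟩

end IsReKIteration

theorem rek_projected_residuals_orthogonal_general {b : V} {x p r : ℕ → V}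
    (h : IsReKIteration B S P b x p r) (hS : B.IsSelfAdjoint S) (hP : B.IsSelfAdjoint P)
    (hPdef : ∀ v, B v (P v) = 0 → P v = 0) {k : ℕ}
    (hcurv : ∀ j < k, B (p j) (S (p j)) ≠ 0) : ∀ i < k, B (r k) (P (r i)) = 0 :=
  h.orthogonal_projected_residual (h.orthogonal_and_conjugate hS hP hPdef hcurv).1

end ReK

/-- Orthogonality of the projected residuals of the ReK method: if the ReK directions
`p₀, …, p_{q−1}` are all nonzero, then for every `k = 1, …, q` and every
`i = 0, …, k−1` the residuals satisfy `r_kᵀ Π_C r_i = 0`. -/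
theorem rek_projected_residuals_orthogonal
    (n m : ℕ) (hn : 0 < n) (hm : 0 < m)
    (S : Matrix (Fin n) (Fin n) ℝ) (hS : S.PosDef)
    (C : Matrix (Fin n) (Fin m) ℝ) (b : Fin n → ℝ)
    (q : ℕ) (hq : q = C.rank)
    (Pr : Matrix (Fin n) (Fin n) ℝ)
    (hPrSym : Prᵀ = Pr) (hPrIdem : Pr * Pr = Pr)
    (hPrRange : LinearMap.range Pr.mulVecLin = LinearMap.range C.mulVecLin)
    (x p r : ℕ → (Fin n → ℝ))
    (hr : ∀ k, r k = b - S.mulVec (x k))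
    (hx0 : x 0 ∈ LinearMap.range C.mulVecLin)
    (hp0 : p 0 = Pr.mulVec (r 0))
    (hprec : ∀ k : ℕ, p (k + 1) = Pr.mulVec (r (k + 1)) +
        (-(r (k + 1) ⬝ᵥ Pr.mulVec (S.mulVec (p k))) / (p k ⬝ᵥ S.mulVec (p k))) • p k)
    (hxrec : ∀ k : ℕ, x (k + 1) = x k +
        ((r k ⬝ᵥ p k) / (p k ⬝ᵥ S.mulVec (p k))) • p k)
    (hpnz : ∀ k, k < q → p k ≠ 0) :
    ∀ k : ℕ, 1 ≤ k → k ≤ q → ∀ i : ℕ, i < k → r k ⬝ᵥ Pr.mulVec (r i) = 0 := by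
  have hRek : IsReKIteration (dotProductBilin ℝ ℝ) S.mulVecLin Pr.mulVecLin b x p r :=
    ⟨hr, hp0, hprec, hxrec⟩
  have hS_adj := isSelfAdjoint_mulVecLin_of_isSymm (isHermitian_iff_isSymm.mp hS.isHermitian)
  have hPr_adj := isSelfAdjoint_mulVecLin_of_isSymm hPrSym
  have hPr_idem : IsIdempotentElem Pr.mulVecLin := by
    rw [IsIdempotentElem, Module.End.mul_eq_comp, ← mulVecLin_mul, hPrIdem]
  have hPr_def : ∀ v, v ⬝ᵥ Pr *ᵥ v = 0 → Pr *ᵥ v = 0 := fun _ ↦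
    apply_eq_zero_of_isSelfAdjoint_of_isIdempotentElem
      (fun _ hu ↦ dotProduct_self_eq_zero.mp hu) hPr_adj hPr_idem
  intro k _ hkq
  have hcurv : ∀ j < k, p j ⬝ᵥ S *ᵥ p j ≠ 0 := fun j hj ↦
    (hS.dotProduct_mulVec_pos (hpnz j (hj.trans_le hkq))).ne'
  exact rek_projected_residuals_orthogonal_general hRek hS_adj hPr_adj hPr_def hcurv
end
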